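/- arXiv:2104.03138 — 7 statements merged into one kernel-verified Lean document; each statement's English description precedes it below -/
import Mathlib

section
/- Let 𝓕 be a set of c-edge-colored graphs and let G be a c-edge-colored graph that is non-cascading with respect to 𝓕, with X the set of conflict edges of G. If S̃ is an edge set of G such that every induced subgraph of G that is color-isomorphic to some F ∈ 𝓕 is no longer an induced copy of that F in G − S̃, then for S := S̃ ∩ X the graph G − S contains no induced subgraph color-isomorphic to any F ∈ 𝓕. -/
/-!
Edges of `Stilde` outside the conflict set are irrelevant: they lie in no induced copy of a family
member in `G`. Since a non-cascading graph acquires no new induced copies when conflict edges are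
deleted, a copy surviving in `G - (Stilde ∩ X)` is already induced in `G`, all its edges lie in
`X`, and it therefore survives in `G - Stilde` as well.
-/

/-- A `c`-edge-colored graph: a simple graph together with a color in `Fin c`
for each pair of vertices (only relevant on edges), symmetric in its arguments. -/
structure EColGraph (V : Type) (c : ℕ) where
  graph : SimpleGraph V
  col : V → V → Fin c
  col_symm : ∀ u v, col u v = col v u

namespace EColGraph

variable {V : Type} {c : ℕ}

/-- Delete a set of edges from an edge-colored graph (remaining edges keep their colors). -/
def del (G : EColGraph V c) (S : Set (Sym2 V)) : EColGraph V c :=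
  { graph := G.graph.deleteEdges S, col := G.col, col_symm := G.col_symm }

/-- `f` embeds `F` into `G` as an induced subgraph, preserving edge colors. -/
def IsInducedCopy {W : Type} (F : EColGraph W c) (G : EColGraph V c) (f : W → V) : Prop :=
  Function.Injective f ∧
    (∀ a b : W, F.graph.Adj a b ↔ G.graph.Adj (f a) (f b)) ∧
    (∀ a b : W, F.graph.Adj a b → G.col (f a) (f b) = F.col a b)

/-- `f` embeds `F` into `G` as a (not necessarily induced) subgraph, preserving edge colors. -/
def IsSubCopy {W : Type} (F : EColGraph W c) (G : EColGraph V c) (f : W → V) : Prop :=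
  Function.Injective f ∧
    (∀ a b : W, F.graph.Adj a b → G.graph.Adj (f a) (f b)) ∧
    (∀ a b : W, F.graph.Adj a b → G.col (f a) (f b) = F.col a b)

end EColGraph

variable {V : Type} {c : ℕ} {ι : Type} {W : ι → Type}

/-- The conflict edges of `G` with respect to the family `Fam`: edges lying in an
induced subgraph of `G` that is color-isomorphic to some member of the family. -/
def ConflictEdges (G : EColGraph V c) (Fam : ∀ i, EColGraph (W i) c) : Set (Sym2 V) :=
  {e | ∃ (i : ι) (f : W i → V) (a b : W i),
    EColGraph.IsInducedCopy (Fam i) G f ∧ (Fam i).graph.Adj a b ∧ e = s(f a, f b)}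

/-- `G` is non-cascading w.r.t. `Fam`: every non-induced subgraph copy of a member of the
family is not an induced copy in `G − X'` for any subset `X'` of the conflict edges. -/
def NonCascading (G : EColGraph V c) (Fam : ∀ i, EColGraph (W i) c) : Prop :=
  ∀ (i : ι) (f : W i → V), EColGraph.IsSubCopy (Fam i) G f →
    ¬ EColGraph.IsInducedCopy (Fam i) G f →
    ∀ X' ⊆ ConflictEdges G Fam, ¬ EColGraph.IsInducedCopy (Fam i) (G.del X') f

theorem stmt0 (G : EColGraph V c) (Fam : ∀ i, EColGraph (W i) c)
    (hnc : NonCascading G Fam) (Stilde : Set (Sym2 V))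
    (hS : ∀ (i : ι) (f : W i → V), EColGraph.IsInducedCopy (Fam i) G f →
      ¬ EColGraph.IsInducedCopy (Fam i) (G.del Stilde) f) :
    ∀ (i : ι) (f : W i → V),
      ¬ EColGraph.IsInducedCopy (Fam i) (G.del (Stilde ∩ ConflictEdges G Fam)) f := by
  intro i f hf
  -- A copy in `G - S` is a subgraph copy in `G`; non-cascading forces it to be induced in `G`.
  have hind : EColGraph.IsInducedCopy (Fam i) G f := by
    by_contra hn
    refine hnc i f ⟨hf.1, fun a b hab => ?_, hf.2.2⟩ hn _ Set.inter_subset_right hf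
    exact (SimpleGraph.deleteEdges_adj.mp ((hf.2.1 a b).mp hab)).1
  -- Its edges are then conflict edges, so any of them lying in `Stilde` would be deleted in `G - S`.
  refine hS i f hind ⟨hf.1, fun a b => ⟨fun hab => ?_, fun hab => ?_⟩, hf.2.2⟩
  · obtain ⟨hG, hnot⟩ := SimpleGraph.deleteEdges_adj.mp ((hf.2.1 a b).mp hab)
    exact SimpleGraph.deleteEdges_adj.mpr
      ⟨hG, fun hmem => hnot ⟨hmem, i, f, a, b, hind, hab, rfl⟩⟩
  · exact (hind.2.1 a b).mpr (SimpleGraph.deleteEdges_adj.mp hab).1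
end

section
/- Let ℓ ≥ 3, d ≥ 1 and 1 ≤ c ≤ ℓ−1. Let G be a c-edge-colored path with vertex sequence v_1, …, v_{d·(ℓ−1)} (so {v_i, v_{i+1}} is an edge for every 1 ≤ i < d·(ℓ−1) and there are no other edges) such that any ℓ consecutive vertices induce a c-colored P_ℓ, and let S be a set of exactly d−1 edges of G. Then G − S contains no induced c-colored P_ℓ if and only if S = { {v_i, v_{i+1}} : 1 ≤ i < d·(ℓ−1) and i ≡ 0 (mod ℓ−1) }. -/
/-- The path graph on `Fin n`: `i` is adjacent to `j` iff they are consecutive. -/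
def pathAdj (n : ℕ) : SimpleGraph (Fin n) :=
  SimpleGraph.fromRel (fun i j => (i : ℕ) + 1 = (j : ℕ))

/-- `H` contains an induced path on `ℓ` vertices whose edges use exactly `cc` distinct colors. -/
def HasInducedColoredPath {V : Type} {c : ℕ} (H : EColGraph V c) (ℓ cc : ℕ) : Prop :=
  ∃ w : Fin ℓ → V, Function.Injective w ∧
    (∀ a b : Fin ℓ, H.graph.Adj (w a) (w b) ↔ (pathAdj ℓ).Adj a b) ∧
    Set.ncard {k : Fin c | ∃ a b : Fin ℓ, (pathAdj ℓ).Adj a b ∧ H.col (w a) (w b) = k} = cc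

/-- The index `j` is a cut of `S` if the edge from vertex `j - 1` to vertex `j` belongs to `S`. -/
def IsCut {n : ℕ} (S : Set (Sym2 (Fin n))) (j : ℕ) : Prop :=
  ∃ h1 : 1 ≤ j, ∃ h2 : j < n, s((⟨j - 1, by omega⟩ : Fin n), (⟨j, h2⟩ : Fin n)) ∈ S

lemma pathAdj_iff {n : ℕ} (a b : Fin n) :
    (pathAdj n).Adj a b ↔ (a : ℕ) + 1 = b ∨ (b : ℕ) + 1 = a := by
  unfold pathAdj
  rw [SimpleGraph.fromRel_adj]
  constructor
  · exact fun h => h.2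
  · intro h
    refine ⟨?_, h⟩
    rintro rfl
    omega

lemma isCut_succ {n : ℕ} {S : Set (Sym2 (Fin n))} {a b : Fin n} (h : (a : ℕ) + 1 = b) :
    IsCut S b ↔ s(a, b) ∈ S := by
  have e : ∀ h' : (b : ℕ) - 1 < n, (⟨(b : ℕ) - 1, h'⟩ : Fin n) = a := by
    intro h'
    ext
    simp only
    omega
  constructor
  · rintro ⟨h1, h2, h3⟩
    rwa [e] at h3
  · intro h3
    refine ⟨by omega, b.2, ?_⟩
    rwa [e]

open Classical in
lemma count_cut_le {n : ℕ} (S : Set (Sym2 (Fin n))) : Nat.count (IsCut S) n ≤ S.ncard := by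
  rcases Nat.eq_zero_or_pos n with rfl | hn
  · simp
  rw [Nat.count_eq_card_filter_range, ← Set.ncard_coe_finset]
  have hmem : ∀ j ∈ ((Finset.range n).filter (IsCut S) : Set ℕ), IsCut S j := by
    intro j hj
    simpa using (Finset.mem_filter.1 hj).2
  refine Set.ncard_le_ncard_of_injOn
    (fun j => if h : j < n then s((⟨j - 1, by omega⟩ : Fin n), (⟨j, h⟩ : Fin n)) else
      s((⟨0, hn⟩ : Fin n), ⟨0, hn⟩)) ?_ ?_ (Set.toFinite _)
  · intro j hj
    obtain ⟨h1, h2, h3⟩ := hmem j hj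
    simpa only [dif_pos h2] using h3
  · intro j hj k hk hjk
    obtain ⟨h1, h2, -⟩ := hmem j hj
    obtain ⟨k1, k2, -⟩ := hmem k hk
    simp only [dif_pos h2, dif_pos k2, Sym2.eq_iff, Fin.mk.injEq] at hjk
    omega

open Classical in
/-- A set `P` of naturals that meets every `m` consecutive positive integers below `d * m`, but has
fewer than `d` elements below `d * m`, has there the same positive elements as the multiples
of `m`. -/
lemma cuts_eq_multiples {P : ℕ → Prop} {m d : ℕ} (hm : 1 ≤ m) (hd : 1 ≤ d)
    (hwin : ∀ i, i + m < d * m → ∃ j, i < j ∧ j ≤ i + m ∧ P j)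
    (hcount : Nat.count P (d * m) ≤ d - 1) (j : ℕ) (hj1 : 1 ≤ j) (hj : j < d * m) :
    P j ↔ j % m = 0 := by
  have step : ∀ i, i + m < d * m → Nat.count P (i + 1) + 1 ≤ Nat.count P (i + m + 1) := by
    intro i hi
    obtain ⟨j, h1, h2, h3⟩ := hwin i hi
    have a := Nat.count_monotone P (show i + 1 ≤ j by omega)
    have b := Nat.count_monotone P (show j + 1 ≤ i + m + 1 by omega)
    rw [Nat.count_succ, if_pos h3] at b
    omega
  -- Counting from the left: at least `k` elements up to `k * m`.
  have lower : ∀ k, k < d → k ≤ Nat.count P (k * m + 1) := by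
    intro k
    induction k with
    | zero => simp
    | succ k ih =>
      intro hk
      have := ih (by omega)
      have h := step (k * m) (by nlinarith)
      rw [Nat.succ_mul]
      omega
  -- Counting from the right: at most `d - t - 1` elements below `(d - t) * m`.
  have upper : ∀ t, t < d → Nat.count P ((d - t) * m) + t + 1 ≤ d := by
    intro t
    induction t with
    | zero =>
      intro _
      simp only [Nat.sub_zero]
      omega
    | succ t ih =>
      intro ht
      have := ih (by omega)
      obtain ⟨q, hq⟩ : ∃ q, d - (t + 1) = q + 1 := ⟨d - (t + 1) - 1, by omega⟩
      have hq' : d - t = q + 1 + 1 := by omega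
      have hle : (q + 1 + 1) * m ≤ d * m := Nat.mul_le_mul_right _ (by omega)
      have hpos : 1 ≤ (q + 1) * m := Nat.mul_pos (by omega) hm
      have e : (q + 1 + 1) * m = (q + 1) * m + m := Nat.succ_mul _ _
      have h := step ((q + 1) * m - 1) (by omega)
      rw [hq'] at this
      rw [hq]
      rw [show (q + 1) * m - 1 + 1 = (q + 1) * m by omega,
        show (q + 1) * m - 1 + m + 1 = (q + 1 + 1) * m by omega] at h
      omega
  have upper' : ∀ k, 1 ≤ k → k ≤ d → Nat.count P (k * m) + 1 ≤ k := by
    intro k h1 h2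
    have := upper (d - k) (by omega)
    rw [show d - (d - k) = k by omega] at this
    omega
  have hdm := Nat.div_add_mod j m
  rw [Nat.mul_comm m] at hdm
  have hkd : j / m < d := Nat.div_lt_of_lt_mul (by rwa [Nat.mul_comm])
  have hlow := lower (j / m) hkd
  constructor
  · intro hP
    by_contra hne
    have hup := upper' (j / m + 1) (Nat.le_add_left 1 _) hkd
    have hmod := Nat.mod_lt j hm
    rw [Nat.succ_mul] at hup
    have a := Nat.count_monotone P (show j / m * m + 1 ≤ j by omega)
    have b := Nat.count_monotone P (show j + 1 ≤ j / m * m + m by omega)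
    rw [Nat.count_succ, if_pos hP] at b
    omega
  · intro h
    have hjm : j / m * m = j := by omega
    have hk : 1 ≤ j / m := by
      rcases Nat.eq_zero_or_pos (j / m) with h' | h'
      · rw [h'] at hjm
        omega
      · exact h'
    have hup := upper' (j / m) hk hkd.le
    rw [hjm] at hup hlow
    rw [Nat.count_succ] at hlow
    by_contra hP
    rw [if_neg hP] at hlow
    omega

/-- If `G - S` has no induced `c`-colored `P_ℓ`, then every `ℓ` consecutive vertices are separated by
a cut: otherwise they would induce such a path. -/
lemma exists_cut {ℓ c n : ℕ} (G : EColGraph (Fin n) c) (hpath : G.graph = pathAdj n)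
    (hconsec : ∀ i : ℕ, ∀ h : i + ℓ ≤ n,
      Set.ncard {k : Fin c | ∃ j : ℕ, ∃ hj : j + 1 < ℓ,
        G.col ⟨i + j, by omega⟩ ⟨i + j + 1, by omega⟩ = k} = c)
    (S : Set (Sym2 (Fin n))) (hfree : ¬ HasInducedColoredPath (G.del S) ℓ c)
    (i : ℕ) (hi : i + ℓ ≤ n) : ∃ j, i < j ∧ j < i + ℓ ∧ IsCut S j := by
  by_contra hno
  push Not at hno
  apply hfree
  refine ⟨fun a => ⟨i + a, by omega⟩, ?_, ?_, ?_⟩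
  · intro a b hab
    simp only [Fin.mk.injEq] at hab
    ext
    omega
  · intro a b
    simp only [EColGraph.del, hpath, SimpleGraph.deleteEdges_adj, pathAdj_iff]
    constructor
    · rintro ⟨h, -⟩
      omega
    · intro h
      refine ⟨by omega, ?_⟩
      rcases h with h | h
      · rw [← isCut_succ (by simp only; omega)]
        exact hno _ (by simp only; omega) (by simp only; omega)
      · rw [Sym2.eq_swap, ← isCut_succ (by simp only; omega)]
        exact hno _ (by simp only; omega) (by simp only; omega)
  · refine Eq.trans (congrArg Set.ncard ?_) (hconsec i hi)
    ext k
    simp only [Set.mem_ofPred_eq, pathAdj_iff, EColGraph.del]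
    constructor
    · rintro ⟨a, b, h | h, hk⟩
      · refine ⟨a, by omega, ?_⟩
        rw [← hk]
        congr 2
        omega
      · refine ⟨b, by omega, ?_⟩
        rw [← hk, G.col_symm]
        congr 2
        omega
    · rintro ⟨j, hj, hk⟩
      exact ⟨⟨j, by omega⟩, ⟨j + 1, hj⟩, Or.inl rfl, hk⟩

theorem stmt1 (ℓ d c n : ℕ) (hℓ : 3 ≤ ℓ) (hd : 1 ≤ d) (hc : 1 ≤ c) (hcℓ : c ≤ ℓ - 1)
    (hn : n = d * (ℓ - 1))
    (G : EColGraph (Fin n) c)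
    -- `G` is a path with vertex sequence `v_1, …, v_{d·(ℓ−1)}` (0-indexed here)
    (hpath : G.graph = pathAdj n)
    -- any `ℓ` consecutive vertices induce a `c`-colored `P_ℓ`
    (hconsec : ∀ i : ℕ, ∀ h : i + ℓ ≤ n,
      Set.ncard {k : Fin c | ∃ j : ℕ, ∃ hj : j + 1 < ℓ,
        G.col ⟨i + j, by omega⟩ ⟨i + j + 1, by omega⟩ = k} = c)
    (S : Set (Sym2 (Fin n)))
    (hSsub : S ⊆ G.graph.edgeSet) (hScard : S.ncard = d - 1) :
    ¬ HasInducedColoredPath (G.del S) ℓ c ↔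
      S = {e | ∃ i : ℕ, ∃ h1 : 1 ≤ i, ∃ h2 : i < n, i % (ℓ - 1) = 0 ∧
        e = s((⟨i - 1, by omega⟩ : Fin n), (⟨i, h2⟩ : Fin n))} := by
  classical
  constructor
  · intro hfree
    have key := cuts_eq_multiples (P := IsCut S) (m := ℓ - 1) (by omega) hd
      (fun i hi => by
        obtain ⟨j, h1, h2, h3⟩ := exists_cut G hpath hconsec S hfree i (by omega)
        exact ⟨j, h1, by omega, h3⟩)
      (by rw [← hn, ← hScard]; exact count_cut_le S)
    ext e
    simp only [Set.mem_ofPred_eq]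
    constructor
    · intro he
      have main : ∀ a b : Fin n, (a : ℕ) + 1 = b → s(a, b) ∈ S →
          ∃ i : ℕ, ∃ h1 : 1 ≤ i, ∃ h2 : i < n, i % (ℓ - 1) = 0 ∧
            s(a, b) = s((⟨i - 1, by omega⟩ : Fin n), (⟨i, h2⟩ : Fin n)) := by
        intro a b hab hS
        refine ⟨b, by omega, b.2, ?_, ?_⟩
        · exact (key b (by omega) (by omega)).1 ((isCut_succ hab).2 hS)
        · congr 2
          ext
          simp only
          omega
      induction e with
      | _ a b =>
        have hadj := hSsub he
        rw [SimpleGraph.mem_edgeSet, hpath, pathAdj_iff] at hadj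
        rcases hadj with h | h
        · exact main a b h he
        · rw [Sym2.eq_swap] at he ⊢
          exact main b a h he
    · rintro ⟨i, h1, h2, h3, rfl⟩
      obtain ⟨_, _, h⟩ := (key i h1 (by omega)).2 h3
      exact h
  · rintro hS ⟨w, hinj, hadj, -⟩
    have succ : ∀ a b : Fin n, (a : ℕ) + 1 = b → s(a, b) ∉ S →
        (a : ℕ) / (ℓ - 1) = (b : ℕ) / (ℓ - 1) := by
      intro a b hab hab'
      rw [← hab, Nat.succ_div, if_neg, Nat.add_zero]
      intro hdvd
      apply hab'
      rw [← isCut_succ hab]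
      rw [hab] at hdvd
      refine ⟨by omega, b.2, ?_⟩
      rw [hS]
      exact ⟨b, by omega, b.2, Nat.mod_eq_zero_of_dvd hdvd, rfl⟩
    have block : ∀ k (hk : k < ℓ),
        (w ⟨k, hk⟩ : ℕ) / (ℓ - 1) = (w ⟨0, by omega⟩ : ℕ) / (ℓ - 1) := by
      intro k
      induction k with
      | zero => intro _; rfl
      | succ k ih =>
        intro hk
        rw [← ih (by omega)]
        have h := (hadj ⟨k, by omega⟩ ⟨k + 1, hk⟩).2 ((pathAdj_iff _ _).2 (Or.inl rfl))
        simp only [EColGraph.del, hpath, SimpleGraph.deleteEdges_adj, pathAdj_iff] at h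
        obtain ⟨h | h, h'⟩ := h
        · exact (succ _ _ h h').symm
        · rw [Sym2.eq_swap] at h'
          exact succ _ _ h h'
    -- Within a block, a vertex is determined by its residue, so `w` injects `ℓ` into `ℓ - 1`.
    have hinj' : Function.Injective
        (fun a : Fin ℓ => (⟨(w a : ℕ) % (ℓ - 1), Nat.mod_lt _ (by omega)⟩ : Fin (ℓ - 1))) := by
      intro a b hab
      simp only [Fin.mk.injEq] at hab
      apply hinj
      ext
      rw [← Nat.div_add_mod (w a : ℕ) (ℓ - 1), ← Nat.div_add_mod (w b : ℕ) (ℓ - 1), hab,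
        block a a.2, block b b.2]
    have := Fintype.card_le_of_injective _ hinj'
    simp only [Fintype.card_fin] at this
    omega
end

section
/- For every c-edge-colored graph G, the relation ∼ of belonging to the same colored neighborhood class is an equivalence relation on the vertices of G. -/
variable {V : Type} {c : ℕ}

/-- `N^i(v)`: the vertices joined to `v` by an edge of color `i`. -/
def colNbhd (G : EColGraph V c) (i : Fin c) (v : V) : Set V :=
  {u | G.graph.Adj v u ∧ G.col v u = i}

/-- `N^i[v] = N^i(v) ∪ {v}`. -/
def colNbhdCl (G : EColGraph V c) (i : Fin c) (v : V) : Set V :=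
  insert v (colNbhd G i v)

/-- `u ∼ v`: `u` and `v` belong to the same colored neighborhood class. -/
def Sim (G : EColGraph V c) (u v : V) : Prop :=
  (∃ i : Fin c, colNbhdCl G i u = colNbhdCl G i v ∧
    ∀ j : Fin c, j ≠ i → colNbhd G j u = colNbhd G j v) ∨
  (∀ j : Fin c, colNbhd G j u = colNbhd G j v)

theorem mem_colNbhd_comm (G : EColGraph V c) (i : Fin c) (u v : V) :
    u ∈ colNbhd G i v ↔ v ∈ colNbhd G i u := by
  simp only [colNbhd, Set.mem_ofPred_eq, G.graph.adj_comm v u, G.col_symm v u]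

theorem not_mem_colNbhd_self (G : EColGraph V c) (i : Fin c) (v : V) :
    v ∉ colNbhd G i v := fun h => G.graph.loopless.irrefl v h.1

/-- Colored neighborhood classes are classes of colored twins: `u ∼ v` iff no third vertex
distinguishes `u` from `v`. -/
theorem sim_iff_twins (G : EColGraph V c) (u v : V) :
    Sim G u v ↔ ∀ w, w ≠ u → w ≠ v → ∀ i, (w ∈ colNbhd G i u ↔ w ∈ colNbhd G i v) := by
  constructor
  · rintro (⟨i, hi, hj⟩ | h) w hwu hwv k
    · by_cases hk : k = i
      · subst hk
        have := Set.ext_iff.1 hi w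
        simpa only [colNbhdCl, Set.mem_insert_iff, hwu, hwv, false_or] using this
      · rw [hj k hk]
    · rw [h k]
  · intro h
    -- Off the color of a possible edge `uv`, the two open neighborhoods agree.
    have key : ∀ j, u ∉ colNbhd G j v → colNbhd G j u = colNbhd G j v := by
      intro j hj
      ext w
      have hj' := mt (mem_colNbhd_comm G j u v).2 hj
      by_cases hwu : w = u
      · subst hwu
        exact iff_of_false (not_mem_colNbhd_self G j w) hj
      by_cases hwv : w = v
      · subst hwv
        exact iff_of_false hj' (not_mem_colNbhd_self G j w)
      exact h w hwu hwv j
    by_cases hadj : G.graph.Adj v u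
    · refine Or.inl ⟨G.col v u, ?_, fun j hj => key j fun hu => hj hu.2.symm⟩
      have huv : u ∈ colNbhd G (G.col v u) v := ⟨hadj, rfl⟩
      have hvu := (mem_colNbhd_comm G _ u v).1 huv
      ext w
      simp only [colNbhdCl, Set.mem_insert_iff]
      by_cases hwu : w = u
      · subst hwu
        exact iff_of_true (Or.inl rfl) (Or.inr huv)
      by_cases hwv : w = v
      · subst hwv
        exact iff_of_true (Or.inr hvu) (Or.inl rfl)
      simp only [hwu, hwv, false_or, h w hwu hwv]
    · exact Or.inr fun j => key j fun hu => hadj hu.1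

theorem stmt5 (G : EColGraph V c) : Equivalence (Sim G) := by
  refine ⟨fun u => Or.inr fun _ => rfl, fun {u v} h => ?_, fun {u v w} huv hvw => ?_⟩
  · rw [sim_iff_twins] at h ⊢
    exact fun x hv hu i => (h x hu hv i).symm
  · by_cases huw : u = w
    · exact huw ▸ Or.inr fun _ => rfl
    rw [sim_iff_twins] at huv hvw ⊢
    intro x hxu hxw i
    by_cases hxv : x = v
    · subst hxv
      calc x ∈ colNbhd G i u ↔ u ∈ colNbhd G i x := mem_colNbhd_comm G i x u
        _ ↔ u ∈ colNbhd G i w := hvw u hxu.symm huw i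
        _ ↔ w ∈ colNbhd G i u := mem_colNbhd_comm G i u w
        _ ↔ w ∈ colNbhd G i x := huv w (Ne.symm huw) hxw.symm i
        _ ↔ x ∈ colNbhd G i w := mem_colNbhd_comm G i w x
    · exact (huv x hxu hxv i).trans (hvw x hxv hxw i)
end

section
/- Let 𝓕 be a set of c-edge-colored graphs each of which is color diverse. Let G be a c-edge-colored graph, let K be a colored neighborhood class of G, and let S be an edge set such that G − S contains no induced subgraph color-isomorphic to any F ∈ 𝓕. Then there exists an edge set S' with |S'| ≤ |S| such that: (a) S' is consistent with K; (b) G − S' contains no induced subgraph color-isomorphic to any F ∈ 𝓕; (c) for every edge e ∉ E(K) ∪ E(K, N(K)) one has e ∈ S' if and only if e ∈ S; and (d) for every class K' ∈ 𝒩(K), if S is consistent with K' then S' is consistent with K'. -/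
variable {V : Type} {c : ℕ}

/-- The colored neighborhood class of `v`. -/
def simClass (G : EColGraph V c) (v : V) : Set V := {u | Sim G u v}

/-- `K` is a colored neighborhood class of `G`. -/
def IsNbhdClass (G : EColGraph V c) (K : Set V) : Prop := ∃ v : V, K = simClass G v

/-- The neighborhood `N(K)` of a vertex set `K`. -/
def classNbhd (G : EColGraph V c) (K : Set V) : Set V :=
  {w | w ∉ K ∧ ∃ u ∈ K, G.graph.Adj u w}

/-- `S` is consistent with `K`: every vertex of `N(K)` keeps either all or none of
its edges towards `K` in `S`. -/
def Consistent (G : EColGraph V c) (S : Set (Sym2 V)) (K : Set V) : Prop :=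
  ∀ w ∈ classNbhd G K,
    (∀ u ∈ K, G.graph.Adj u w → s(u, w) ∈ S) ∨ (∀ u ∈ K, G.graph.Adj u w → s(u, w) ∉ S)

/-- `E(K)`: the edges of `G` with both endpoints in `K`. -/
def edgesWithin (G : EColGraph V c) (K : Set V) : Set (Sym2 V) :=
  {e | ∃ u ∈ K, ∃ u' ∈ K, G.graph.Adj u u' ∧ e = s(u, u')}

/-- `E(K, K')`: the edges of `G` with one endpoint in `K` and one in `K'`. -/
def edgesBetween (G : EColGraph V c) (K K' : Set V) : Set (Sym2 V) :=
  {e | ∃ u ∈ K, ∃ w ∈ K', G.graph.Adj u w ∧ e = s(u, w)}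

/-- A `c`-edge-colored graph is color diverse if all its colored neighborhood
classes have size one. -/
def ColorDiverse {W : Type} (F : EColGraph W c) : Prop :=
  ∀ a b : W, Sim F a b → a = b

/-- Equivalence in terms of third vertices: `u ∼ v` iff every other vertex is joined to `u` and to
`v` alike and by the same color. Whether (a) or (b) applies only records whether `u` and `v` are
themselves adjacent. -/
lemma sim_iff (G : EColGraph V c) (u v : V) :
    Sim G u v ↔ ∀ x, x ≠ u → x ≠ v →
      ((G.graph.Adj u x ↔ G.graph.Adj v x) ∧ (G.graph.Adj u x → G.col u x = G.col v x)) := by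
  constructor
  · intro h x hu hv
    have key : ∀ j, (G.graph.Adj u x ∧ G.col u x = j) ↔ (G.graph.Adj v x ∧ G.col v x = j) := by
      intro j
      rcases h with ⟨i, hi, hj⟩ | h
      · by_cases hji : j = i
        · subst hji
          have := Set.ext_iff.1 hi x
          simpa [colNbhdCl, colNbhd, hu, hv] using this
        · exact Set.ext_iff.1 (hj j hji) x
      · exact Set.ext_iff.1 (h j) x
    refine ⟨⟨fun h => ((key _).1 ⟨h, rfl⟩).1, fun h => ((key _).2 ⟨h, rfl⟩).1⟩,
      fun h => ((key _).1 ⟨h, rfl⟩).2.symm⟩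
  · intro h
    by_cases huv : G.graph.Adj u v
    · left
      have hvu := huv.symm
      have hc := G.col_symm u v
      refine ⟨G.col u v, ?_, ?_⟩
      · ext x
        have := h x
        by_cases hu : x = u
        · subst hu; simp [colNbhdCl, colNbhd, hvu, hc]
        by_cases hv : x = v
        · subst hv; simp [colNbhdCl, colNbhd, huv]
        simp only [colNbhdCl, colNbhd, Set.mem_insert_iff, Set.mem_ofPred_eq, hu, hv, false_or]
        grind
      · intro j hj
        ext x
        have := h x
        by_cases hu : x = u
        · subst hu; simp [colNbhd, hvu, ← hc, Ne.symm hj]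
        by_cases hv : x = v
        · subst hv; simp [colNbhd, huv, Ne.symm hj]
        simp only [colNbhd, Set.mem_ofPred_eq]
        grind
    · right
      have hvu : ¬ G.graph.Adj v u := fun h => huv h.symm
      intro j
      ext x
      have := h x
      by_cases hu : x = u
      · subst hu; simp [colNbhd, hvu]
      by_cases hv : x = v
      · subst hv; simp [colNbhd, huv]
      simp only [colNbhd, Set.mem_ofPred_eq]
      grind

lemma sim_refl (G : EColGraph V c) (u : V) : Sim G u u := Or.inr fun _ => rfl

lemma sim_symm {G : EColGraph V c} {u v : V} (h : Sim G u v) : Sim G v u := by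
  rw [sim_iff] at *
  intro x hv hu
  have := h x hu hv
  exact ⟨this.1.symm, fun h' => (this.2 (this.1.2 h')).symm⟩

lemma sim_trans {G : EColGraph V c} {u v w : V} (h₁ : Sim G u v) (h₂ : Sim G v w) :
    Sim G u w := by
  by_cases huv : u = v
  · exact huv ▸ h₂
  by_cases hvw : v = w
  · exact hvw ▸ h₁
  by_cases huw : u = w
  · exact huw ▸ sim_refl G u
  rw [sim_iff] at *
  intro x hu hw
  by_cases hv : x = v
  · subst hv
    -- Now `x` plays the role of `v`: the pairs `ux` and `uw` agree since `x ∼ w`, and `uw` and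
    -- `xw` agree since `u ∼ x`.
    have a := h₁ w (Ne.symm huw) (Ne.symm hvw)
    have b := h₂ u huv huw
    have := G.graph.adj_comm u x
    have := G.graph.adj_comm u w
    have := G.graph.adj_comm x w
    have := G.col_symm u x
    have := G.col_symm u w
    have := G.col_symm x w
    grind
  · have a := h₁ x hu hv
    have b := h₂ x hv hw
    grind

/-- Members of one class are joined to a vertex outside it alike. -/
lemma sim_outside {G : EColGraph V c} {v u u' x : V} (hu : u ∈ simClass G v)
    (hu' : u' ∈ simClass G v) (hx : x ∉ simClass G v) :
    (G.graph.Adj u x ↔ G.graph.Adj u' x) ∧ (G.graph.Adj u x → G.col u x = G.col u' x) :=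
  (sim_iff G u u').1 (sim_trans hu (sim_symm hu')) x (fun h => hx (h ▸ hu)) (fun h => hx (h ▸ hu'))

lemma simClass_eq {G : EColGraph V c} {u v : V} (h : u ∈ simClass G v) :
    simClass G v = simClass G u := by
  ext x
  exact ⟨fun hx => sim_trans hx (sim_symm h), fun hx => sim_trans hx h⟩

lemma adj_of_mem_classNbhd {G : EColGraph V c} {v u w : V} (hu : u ∈ simClass G v)
    (hw : w ∈ classNbhd G (simClass G v)) : G.graph.Adj u w := by
  obtain ⟨hwK, u', hu', h⟩ := hw
  exact (sim_outside hu' hu hwK).1.1 h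

/-- Equivalence in a graph is inherited by induced subgraphs. -/
lemma sim_of_isInducedCopy {W : Type} {F : EColGraph W c} {G : EColGraph V c} {f : W → V}
    (hf : EColGraph.IsInducedCopy F G f) {a b : W} (h : Sim G (f a) (f b)) : Sim F a b := by
  obtain ⟨hinj, hadj, hcol⟩ := hf
  rw [sim_iff] at *
  intro x ha hb
  have := h (f x) (hinj.ne ha) (hinj.ne hb)
  refine ⟨by rw [hadj, hadj]; exact this.1, fun hax => ?_⟩
  rw [← hcol _ _ hax, ← hcol b x ((hadj _ _).2 (this.1.1 ((hadj _ _).1 hax)))]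
  exact this.2 ((hadj _ _).1 hax)

/-- The edge set obtained from `S` by dropping its edges inside the class of `v` and giving every
member of the class the same edges towards the neighborhood as `v` has in `S`. -/
def uniformize (G : EColGraph V c) (S : Set (Sym2 V)) (v : V) : Set (Sym2 V) :=
  (S \ (edgesWithin G (simClass G v) ∪
      edgesBetween G (simClass G v) (classNbhd G (simClass G v)))) ∪
    {e | ∃ u ∈ simClass G v, ∃ w ∈ classNbhd G (simClass G v), e = s(u, w) ∧ s(v, w) ∈ S}

lemma mem_uniformize_of_notMem {G : EColGraph V c} {S : Set (Sym2 V)} {v : V} {e : Sym2 V}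
    (he : e ∉ edgesWithin G (simClass G v) ∪
      edgesBetween G (simClass G v) (classNbhd G (simClass G v))) :
    e ∈ uniformize G S v ↔ e ∈ S := by
  constructor
  · rintro (h | ⟨u, hu, w, hw, rfl, -⟩)
    · exact h.1
    · exact absurd (Or.inr ⟨u, hu, w, hw, adj_of_mem_classNbhd hu hw, rfl⟩) he
  · exact fun h => Or.inl ⟨h, he⟩

/-- Away from the class of `v`, membership in the edge set is unchanged. -/
lemma mem_uniformize_outside {G : EColGraph V c} {S : Set (Sym2 V)} {v x y : V}
    (hx : x ∉ simClass G v) (hy : y ∉ simClass G v) :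
    s(x, y) ∈ uniformize G S v ↔ s(x, y) ∈ S := by
  apply mem_uniformize_of_notMem
  rintro (⟨u, hu, w, hw, -, h⟩ | ⟨u, hu, w, hw, -, h⟩) <;>
  · rcases Sym2.eq_iff.1 h with ⟨rfl, rfl⟩ | ⟨rfl, rfl⟩
    · exact hx hu
    · exact hy hu

lemma mem_uniformize_between {G : EColGraph V c} {S : Set (Sym2 V)} {v u w : V}
    (hu : u ∈ simClass G v) (hw : w ∈ classNbhd G (simClass G v)) :
    s(u, w) ∈ uniformize G S v ↔ s(v, w) ∈ S := by
  constructor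
  · rintro (h | ⟨u', hu', w', hw', h, hS⟩)
    · exact absurd (Or.inr ⟨u, hu, w, hw, adj_of_mem_classNbhd hu hw, rfl⟩) h.2
    · rcases Sym2.eq_iff.1 h with ⟨rfl, rfl⟩ | ⟨rfl, rfl⟩
      · exact hS
      · exact absurd hu hw'.1
  · exact fun h => Or.inr ⟨u, hu, w, hw, rfl, h⟩

lemma notMem_uniformize_within {G : EColGraph V c} {S : Set (Sym2 V)} {v u u' : V}
    (hu : u ∈ simClass G v) (hu' : u' ∈ simClass G v) (h : G.graph.Adj u u') :
    s(u, u') ∉ uniformize G S v := by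
  rintro (h' | ⟨x, hx, w, hw, h', -⟩)
  · exact h'.2 (Or.inl ⟨u, hu, u', hu', h, rfl⟩)
  · rcases Sym2.eq_iff.1 h' with ⟨rfl, rfl⟩ | ⟨rfl, rfl⟩
    · exact hw.1 hu'
    · exact hw.1 hu

lemma del_adj {G : EColGraph V c} {S : Set (Sym2 V)} {x y : V} :
    (G.del S).graph.Adj x y ↔ G.graph.Adj x y ∧ s(x, y) ∉ S := by
  simp [EColGraph.del]

/-- Seen from outside the class, a member of the class in `G − S'` looks like `v` in `G − S`. -/
lemma del_uniformize_adj {G : EColGraph V c} {S : Set (Sym2 V)} {v u x : V}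
    (hu : u ∈ simClass G v) (hx : x ∉ simClass G v) :
    (G.del (uniformize G S v)).graph.Adj u x ↔ (G.del S).graph.Adj v x := by
  rw [del_adj, del_adj, (sim_outside hu (sim_refl G v) hx).1]
  refine and_congr_right fun h => not_congr ?_
  exact mem_uniformize_between hu ⟨hx, v, sim_refl G v, h⟩

lemma sim_del_uniformize {G : EColGraph V c} {S : Set (Sym2 V)} {v u u' : V}
    (hu : u ∈ simClass G v) (hu' : u' ∈ simClass G v) :
    Sim (G.del (uniformize G S v)) u u' := by
  rw [sim_iff]
  intro x hxu hxu'
  have hG := (sim_iff G u u').1 (sim_trans hu (sim_symm hu')) x hxu hxu'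
  refine ⟨?_, fun h => hG.2 (del_adj.1 h).1⟩
  by_cases hx : x ∈ simClass G v
  · rw [del_adj, del_adj]
    exact ⟨fun h => ⟨hG.1.1 h.1, notMem_uniformize_within hu' hx (hG.1.1 h.1)⟩,
      fun h => ⟨hG.1.2 h.1, notMem_uniformize_within hu hx (hG.1.2 h.1)⟩⟩
  · rw [del_uniformize_adj hu hx, del_uniformize_adj hu' hx]

/-- An induced copy of a color diverse graph in `G − S'` uses at most one vertex of the class of
`v`; replacing that vertex by `v` gives an induced copy in `G − S`. -/
lemma exists_isInducedCopy_of_uniformize {W : Type} {F : EColGraph W c} (hF : ColorDiverse F)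
    {G : EColGraph V c} {S : Set (Sym2 V)} {v : V} {f : W → V}
    (hf : EColGraph.IsInducedCopy F (G.del (uniformize G S v)) f) :
    ∃ g : W → V, EColGraph.IsInducedCopy F (G.del S) g := by
  classical
  have hone : ∀ x y, f x ∈ simClass G v → f y ∈ simClass G v → x = y := fun x y hx hy =>
    hF x y (sim_of_isInducedCopy hf (sim_del_uniformize hx hy))
  obtain ⟨hinj, hadj, hcol⟩ := hf
  have hv : v ∈ simClass G v := sim_refl G v
  set g : W → V := fun x => if f x ∈ simClass G v then v else f x with hg
  have gin : ∀ x, f x ∈ simClass G v → g x = v := fun x hx => by simp [hg, hx]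
  have gout : ∀ x, f x ∉ simClass G v → g x = f x := fun x hx => by simp [hg, hx]
  have hadj' : ∀ x y, F.graph.Adj x y ↔ (G.del S).graph.Adj (g x) (g y) := by
    intro x y
    rw [hadj]
    by_cases hx : f x ∈ simClass G v <;> by_cases hy : f y ∈ simClass G v
    · rw [hone x y hx hy]; simp
    · rw [gin x hx, gout y hy, del_uniformize_adj hx hy]
    · rw [gout x hx, gin y hy, SimpleGraph.adj_comm, del_uniformize_adj hy hx,
        SimpleGraph.adj_comm]
    · rw [gout x hx, gout y hy, del_adj, del_adj, mem_uniformize_outside hx hy]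
  refine ⟨g, ?_, hadj', ?_⟩
  · intro x y hxy
    by_cases hx : f x ∈ simClass G v <;> by_cases hy : f y ∈ simClass G v
    · exact hone x y hx hy
    · rw [gin x hx, gout y hy] at hxy
      exact absurd (hxy ▸ hv) hy
    · rw [gout x hx, gin y hy] at hxy
      exact absurd (hxy ▸ hv) hx
    · rw [gout x hx, gout y hy] at hxy
      exact hinj hxy
  · intro x y hxy
    rw [← hcol x y hxy]
    change G.col (g x) (g y) = G.col (f x) (f y)
    have hA := (del_adj.1 ((hadj' x y).1 hxy)).1
    by_cases hx : f x ∈ simClass G v <;> by_cases hy : f y ∈ simClass G v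
    · exact absurd (hone x y hx hy) hxy.ne
    · rw [gin x hx, gout y hy] at *
      exact (sim_outside hv hx hy).2 hA
    · rw [gout x hx, gin y hy] at *
      rw [G.col_symm, G.col_symm (f x)]
      exact (sim_outside hv hy hx).2 hA.symm
    · rw [gout x hx, gout y hy]

lemma consistent_uniformize (G : EColGraph V c) (S : Set (Sym2 V)) (v : V) :
    Consistent G (uniformize G S v) (simClass G v) := by
  intro w hw
  by_cases h : s(v, w) ∈ S
  · exact Or.inl fun u hu _ => (mem_uniformize_between hu hw).2 h
  · exact Or.inr fun u hu _ => fun h' => h ((mem_uniformize_between hu hw).1 h')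

lemma consistent_uniformize_of_mem_classNbhd {G : EColGraph V c} {S : Set (Sym2 V)} {v w : V}
    (hw : w ∈ classNbhd G (simClass G v)) (hS : Consistent G S (simClass G w)) :
    Consistent G (uniformize G S v) (simClass G w) := by
  have hdisj : ∀ u ∈ simClass G w, u ∉ simClass G v := fun u hu hu' =>
    hw.1 (sim_trans (sim_symm hu) hu')
  intro x hx
  by_cases hxv : x ∈ simClass G v
  · have hadj : ∀ u ∈ simClass G w, G.graph.Adj u x → G.graph.Adj u v := fun u hu h =>
      ((sim_outside hxv (sim_refl G v) (hdisj u hu)).1.1 h.symm).symm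
    have hv : v ∈ classNbhd G (simClass G w) := by
      obtain ⟨-, u, hu, h⟩ := hx
      exact ⟨fun h' => hdisj v h' (sim_refl G v), u, hu, hadj u hu h⟩
    -- The edges of `S'` at `x` towards the class of `w` copy those of `S` at `v`.
    have hmem : ∀ u ∈ simClass G w, G.graph.Adj u x →
        (s(u, x) ∈ uniformize G S v ↔ s(u, v) ∈ S) := fun u hu h => by
      rw [Sym2.eq_swap, mem_uniformize_between hxv ⟨hdisj u hu, x, hxv, h.symm⟩, Sym2.eq_swap]
    refine (hS v hv).imp (fun h u hu hux => ?_) (fun h u hu hux => ?_)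
    · rw [hmem u hu hux]; exact h u hu (hadj u hu hux)
    · rw [hmem u hu hux]; exact h u hu (hadj u hu hux)
  · refine (hS x hx).imp (fun h u hu hux => ?_) (fun h u hu hux => ?_)
    · rw [mem_uniformize_outside (hdisj u hu) hxv]; exact h u hu hux
    · rw [mem_uniformize_outside (hdisj u hu) hxv]; exact h u hu hux

/-- Some member of a class can serve as a model without enlarging `S`: the one with the fewest
edges of `S` towards the neighborhood. -/
lemma exists_uniformize_ncard_le [Fintype V] (G : EColGraph V c) (S : Set (Sym2 V)) (v₀ : V) :
    ∃ v ∈ simClass G v₀, (uniformize G S v).ncard ≤ S.ncard := by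
  classical
  let N : Set V := classNbhd G (simClass G v₀)
  let D : V → Finset V := fun u => {w | w ∈ N ∧ s(u, w) ∈ S}
  let A : Finset V := {u | u ∈ simClass G v₀}
  obtain ⟨v, hvA, hmin⟩ := A.exists_min_image (fun u => (D u).card)
    ⟨v₀, by simp only [A, Finset.mem_filter, Finset.mem_univ, true_and]; exact sim_refl G v₀⟩
  have hv : v ∈ simClass G v₀ := by simpa [A] using hvA
  refine ⟨v, hv, ?_⟩
  have hK := simClass_eq hv
  let B := edgesWithin G (simClass G v₀) ∪ edgesBetween G (simClass G v₀) N
  let e : (Σ _ : V, V) → Sym2 V := fun p => s(p.1, p.2)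
  have hsub : uniformize G S v ⊆ (S \ B) ∪ ((A.sigma fun _ => D v).image e : Finset (Sym2 V)) := by
    rintro x (h | ⟨u, hu, w, hw, rfl, h⟩)
    · left; rw [← hK] at h; exact h
    · right
      rw [← hK] at hu hw
      simp only [Finset.coe_image, Set.mem_image, Finset.mem_coe, Finset.mem_sigma]
      exact ⟨⟨u, w⟩, ⟨by simpa [A] using hu, by simpa [D] using ⟨hw, h⟩⟩, rfl⟩
  have hinj : Set.InjOn e (A.sigma D : Finset (Σ _ : V, V)) := by
    rintro ⟨u, w⟩ h ⟨u', w'⟩ h' heq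
    simp only [Finset.mem_coe, Finset.mem_sigma, A, D, Finset.mem_filter, Finset.mem_univ,
      true_and] at h h'
    rcases Sym2.eq_iff.1 heq with ⟨h₁, h₂⟩ | ⟨h₁, h₂⟩
    · dsimp only at h₁ h₂; subst h₁ h₂; rfl
    · dsimp only at h₁ h₂
      exact absurd (h₁ ▸ h.1) h'.2.1.1
  have hsup : (((A.sigma D).image e : Finset (Sym2 V)) : Set (Sym2 V)) ⊆ S ∩ B := by
    intro x hx
    simp only [Finset.coe_image, Set.mem_image, Finset.mem_coe, Finset.mem_sigma, A, D,
      Finset.mem_filter, Finset.mem_univ, true_and] at hx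
    obtain ⟨⟨u, w⟩, ⟨hu, hw, hS⟩, rfl⟩ := hx
    exact ⟨hS, Or.inr ⟨u, hu, w, hw, adj_of_mem_classNbhd hu hw, rfl⟩⟩
  calc (uniformize G S v).ncard
      ≤ (S \ B).ncard + ((A.sigma fun _ => D v).image e).card := by
        refine (Set.ncard_le_ncard hsub (Set.toFinite _)).trans ((Set.ncard_union_le _ _).trans ?_)
        rw [Set.ncard_coe_finset]
    _ ≤ (S \ B).ncard + ((A.sigma D).image e).card := by
        refine Nat.add_le_add_left ?_ _
        rw [Finset.card_image_of_injOn hinj]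
        refine Finset.card_image_le.trans ?_
        rw [Finset.card_sigma, Finset.card_sigma]
        exact Finset.sum_le_sum fun u hu => hmin u hu
    _ ≤ (S \ B).ncard + (S ∩ B).ncard := by
        gcongr
        rw [← Set.ncard_coe_finset]
        exact Set.ncard_le_ncard hsup (Set.toFinite _)
    _ = S.ncard := by
        rw [add_comm]
        exact Set.ncard_inter_add_ncard_sdiff_eq_ncard S B (Set.toFinite _)

theorem stmt7 {ι : Type} {W : ι → Type} [Fintype V]
    (G : EColGraph V c) (Fam : ∀ i, EColGraph (W i) c)
    (hdiv : ∀ i, ColorDiverse (Fam i))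
    (K : Set V) (hK : IsNbhdClass G K)
    (S : Set (Sym2 V))
    (hS : ∀ (i : ι) (f : W i → V), ¬ EColGraph.IsInducedCopy (Fam i) (G.del S) f) :
    ∃ S' : Set (Sym2 V), S'.ncard ≤ S.ncard ∧
      Consistent G S' K ∧
      (∀ (i : ι) (f : W i → V), ¬ EColGraph.IsInducedCopy (Fam i) (G.del S') f) ∧
      (∀ e : Sym2 V,
        e ∉ edgesWithin G K ∪ edgesBetween G K (classNbhd G K) → (e ∈ S' ↔ e ∈ S)) ∧
      (∀ w ∈ classNbhd G K,
        Consistent G S (simClass G w) → Consistent G S' (simClass G w)) := by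
  obtain ⟨v₀, rfl⟩ := hK
  obtain ⟨v, hv, hcard⟩ := exists_uniformize_ncard_le G S v₀
  rw [simClass_eq hv]
  refine ⟨uniformize G S v, hcard, consistent_uniformize G S v, fun i f hf => ?_,
    fun e he => mem_uniformize_of_notMem he,
    fun w hw hSw => consistent_uniformize_of_mem_classNbhd hw hSw⟩
  obtain ⟨g, hg⟩ := exists_isInducedCopy_of_uniformize (hdiv i) hf
  exact hS i g hg
end

section
/- A bicolored graph G is a double cluster graph if and only if G contains none of the following four bicolored graphs as an induced subgraph: a path on three vertices with both edges blue; a path on three vertices with both edges red; a triangle with two blue edges and one red edge; a triangle with two red edges and one blue edge. -/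
def blue : Fin 2 := 0
def red : Fin 2 := 1

variable {V : Type}

/-- The subgraph of a bicolored graph formed by the edges of color `i`. -/
def mono (G : EColGraph V 2) (i : Fin 2) : SimpleGraph V :=
  SimpleGraph.fromRel (fun u v => G.graph.Adj u v ∧ G.col u v = i)

/-- A cluster graph: every connected component is a clique. -/
def IsClusterGraph (H : SimpleGraph V) : Prop :=
  ∀ u v : V, H.Reachable u v → u = v ∨ H.Adj u v

/-- A double cluster graph: both the blue subgraph and the red subgraph are cluster graphs. -/
def DoubleCluster (G : EColGraph V 2) : Prop :=
  IsClusterGraph (mono G blue) ∧ IsClusterGraph (mono G red)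

theorem isClusterGraph_iff (H : SimpleGraph V) :
    IsClusterGraph H ↔ ∀ u v w : V, H.Adj u v → H.Adj v w → u ≠ w → H.Adj u w := by
  constructor
  · intro h u v w huv hvw huw
    exact (h u w (huv.reachable.trans hvw.reachable)).resolve_left huw
  · rintro h u v ⟨p⟩
    induction p with
    | nil => exact Or.inl rfl
    | @cons a b c hab _ ih =>
      rcases ih with rfl | hbc
      · exact Or.inr hab
      · exact or_iff_not_imp_left.mpr (h a b c hab hbc)

theorem mono_adj (G : EColGraph V 2) (i : Fin 2) (u v : V) :
    (mono G i).Adj u v ↔ G.graph.Adj u v ∧ G.col u v = i := by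
  rw [mono, SimpleGraph.fromRel_adj, G.graph.adj_comm v u, G.col_symm v u, or_self]
  exact ⟨fun h => h.2, fun h => ⟨h.1.ne, h⟩⟩

/-- For distinct colours `i` and `j` (hence the only two), the colour-`i` subgraph is a cluster graph
iff `G` has neither an induced path with both edges of colour `i` nor a triangle with two edges of
colour `i` and one of colour `j`. -/
theorem isClusterGraph_mono_iff (G : EColGraph V 2) (i j : Fin 2) (hij : i ≠ j) :
    IsClusterGraph (mono G i) ↔
      ((¬ ∃ u v w : V, u ≠ v ∧ v ≠ w ∧ u ≠ w ∧
          G.graph.Adj u v ∧ G.col u v = i ∧ G.graph.Adj v w ∧ G.col v w = i ∧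
          ¬ G.graph.Adj u w) ∧
        (¬ ∃ u v w : V, u ≠ v ∧ v ≠ w ∧ u ≠ w ∧
          G.graph.Adj u v ∧ G.col u v = i ∧ G.graph.Adj v w ∧ G.col v w = i ∧
          G.graph.Adj u w ∧ G.col u w = j)) := by
  simp only [isClusterGraph_iff, mono_adj]
  constructor
  · intro h
    constructor
    · rintro ⟨u, v, w, -, -, huw, a, ca, b, cb, hn⟩
      exact hn (h u v w ⟨a, ca⟩ ⟨b, cb⟩ huw).1
    · rintro ⟨u, v, w, -, -, huw, a, ca, b, cb, -, hj⟩
      exact hij ((h u v w ⟨a, ca⟩ ⟨b, cb⟩ huw).2.symm.trans hj)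
  · rintro ⟨h₁, h₂⟩ u v w ⟨a, ca⟩ ⟨b, cb⟩ huw
    have hadj : G.graph.Adj u w := by
      by_contra hn
      exact h₁ ⟨u, v, w, a.ne, b.ne, huw, a, ca, b, cb, hn⟩
    refine ⟨hadj, ?_⟩
    by_contra hc
    have hj : G.col u w = j := by omega
    exact h₂ ⟨u, v, w, a.ne, b.ne, huw, a, ca, b, cb, hadj, hj⟩

theorem stmt9 [Fintype V] (G : EColGraph V 2) :
    DoubleCluster G ↔
      ((¬ ∃ u v w : V, u ≠ v ∧ v ≠ w ∧ u ≠ w ∧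
          G.graph.Adj u v ∧ G.col u v = blue ∧ G.graph.Adj v w ∧ G.col v w = blue ∧
          ¬ G.graph.Adj u w) ∧
        (¬ ∃ u v w : V, u ≠ v ∧ v ≠ w ∧ u ≠ w ∧
          G.graph.Adj u v ∧ G.col u v = red ∧ G.graph.Adj v w ∧ G.col v w = red ∧
          ¬ G.graph.Adj u w) ∧
        (¬ ∃ u v w : V, u ≠ v ∧ v ≠ w ∧ u ≠ w ∧
          G.graph.Adj u v ∧ G.col u v = blue ∧ G.graph.Adj v w ∧ G.col v w = blue ∧
          G.graph.Adj u w ∧ G.col u w = red) ∧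
        (¬ ∃ u v w : V, u ≠ v ∧ v ≠ w ∧ u ≠ w ∧
          G.graph.Adj u v ∧ G.col u v = red ∧ G.graph.Adj v w ∧ G.col v w = red ∧
          G.graph.Adj u w ∧ G.col u w = blue)) := by
  rw [DoubleCluster, isClusterGraph_mono_iff G blue red (by decide),
    isClusterGraph_mono_iff G red blue (by decide)]
  tauto
end

section
/- Let G be a bicolored graph in the class 𝒯 and let {v, w} be a blue edge of G such that v has a red neighbor u and w has a red neighbor x. Then u ≠ x, the pair {u, x} is an edge of G and is colored blue, and moreover no vertex of G is joined by red edges to both u and v, and no vertex of G is joined by red edges to both w and x. -/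
variable {V : Type}

/-- `G` contains an induced `P_4` with subsequent edge colors red, blue, red. -/
def HasRBRPath (G : EColGraph V 2) : Prop :=
  ∃ a b c d : V, a ≠ b ∧ a ≠ c ∧ a ≠ d ∧ b ≠ c ∧ b ≠ d ∧ c ≠ d ∧
    G.graph.Adj a b ∧ G.col a b = red ∧
    G.graph.Adj b c ∧ G.col b c = blue ∧
    G.graph.Adj c d ∧ G.col c d = red ∧
    ¬ G.graph.Adj a c ∧ ¬ G.graph.Adj a d ∧ ¬ G.graph.Adj b d

/-- The class `𝒯`: double cluster graphs with no induced red-blue-red `P_4`. -/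
def InT (G : EColGraph V 2) : Prop := DoubleCluster G ∧ ¬ HasRBRPath G

/-- Two incident edges of the color `i` close up to a triangle of the color `i`, provided the
edges of that color form a cluster graph. -/
theorem mono_trans (G : EColGraph V 2) (i : Fin 2) (h : IsClusterGraph (mono G i)) {a b c : V}
    (hab : G.graph.Adj a b) (cab : G.col a b = i) (hbc : G.graph.Adj b c) (cbc : G.col b c = i)
    (hac : a ≠ c) : G.graph.Adj a c ∧ G.col a c = i := by
  have h1 : (mono G i).Adj a b := ⟨hab.ne, Or.inl ⟨hab, cab⟩⟩
  have h2 : (mono G i).Adj b c := ⟨hbc.ne, Or.inl ⟨hbc, cbc⟩⟩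
  rcases h a c (h1.reachable.trans h2.reachable) with h3 | ⟨-, h3 | h3⟩
  · exact absurd h3 hac
  · exact h3
  · exact ⟨h3.1.symm, by rw [G.col_symm]; exact h3.2⟩

theorem blue_ne_red : blue ≠ red := by decide

theorem blue_or_red (i : Fin 2) : i = blue ∨ i = red := by
  revert i; decide

/-- A red neighbor of one end of a blue edge is neither equal nor adjacent to the other end. -/
theorem not_adj_of_red_blue (G : EColGraph V 2) (hG : DoubleCluster G) {u v w : V}
    (hvw : G.graph.Adj v w) (hvwc : G.col v w = blue)
    (hu : G.graph.Adj v u) (huc : G.col v u = red) : u ≠ w ∧ ¬ G.graph.Adj u w := by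
  refine ⟨?_, fun huw => ?_⟩
  · rintro rfl
    exact blue_ne_red (hvwc.symm.trans huc)
  · rcases blue_or_red (G.col u w) with h | h
    · have := mono_trans G blue hG.1 hvw hvwc huw.symm (by rw [G.col_symm]; exact h) hu.ne
      exact blue_ne_red (this.2.symm.trans huc)
    · have := mono_trans G red hG.2 hu huc huw h hvw.ne
      exact blue_ne_red (hvwc.symm.trans this.2)

/-- Red neighbors of the two ends of a blue edge are distinct and joined by a blue edge. -/
theorem opposite_edge (G : EColGraph V 2) (hG : InT G) {v w u x : V}
    (hvw : G.graph.Adj v w) (hvwc : G.col v w = blue)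
    (hu : G.graph.Adj v u) (huc : G.col v u = red)
    (hx : G.graph.Adj w x) (hxc : G.col w x = red) :
    u ≠ x ∧ G.graph.Adj u x ∧ G.col u x = blue := by
  obtain ⟨huw, nuw⟩ := not_adj_of_red_blue G hG.1 hvw hvwc hu huc
  obtain ⟨hxv, nxv⟩ := not_adj_of_red_blue G hG.1 hvw.symm (by rw [G.col_symm]; exact hvwc) hx hxc
  have hux : u ≠ x := by
    rintro rfl
    exact nuw hx.symm
  have aux : G.graph.Adj u x := by
    by_contra nux
    exact hG.2 ⟨u, v, w, x, hu.ne', huw, hux, hvw.ne, hxv.symm, hx.ne, hu.symm,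
      by rw [G.col_symm]; exact huc, hvw, hvwc, hx, hxc, nuw, nux, fun h => nxv h.symm⟩
  refine ⟨hux, aux, (blue_or_red _).resolve_right fun h => ?_⟩
  exact nxv (mono_trans G red hG.1.2 hu huc aux h hxv.symm).1.symm

theorem stmt11 (G : EColGraph V 2) (hG : InT G)
    (v w u x : V)
    (hvw : G.graph.Adj v w) (hvwc : G.col v w = blue)
    (hu : G.graph.Adj v u) (huc : G.col v u = red)
    (hx : G.graph.Adj w x) (hxc : G.col w x = red) :
    u ≠ x ∧ G.graph.Adj u x ∧ G.col u x = blue ∧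
      (∀ y : V, ¬ (G.graph.Adj y u ∧ G.col y u = red ∧
        G.graph.Adj y v ∧ G.col y v = red)) ∧
      (∀ y : V, ¬ (G.graph.Adj y w ∧ G.col y w = red ∧
        G.graph.Adj y x ∧ G.col y x = red)) := by
  obtain ⟨hux, aux, cux⟩ := opposite_edge G hG hvw hvwc hu huc hx hxc
  refine ⟨hux, aux, cux, ?_, ?_⟩
  · rintro y ⟨ayu, cyu, ayv, cyv⟩
    obtain ⟨-, ayx, cyx⟩ :=
      opposite_edge G hG hvw hvwc ayv.symm (by rw [G.col_symm]; exact cyv) hx hxc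
    have := mono_trans G blue hG.1.1 ayx cyx aux.symm (by rw [G.col_symm]; exact cux) ayu.ne
    exact blue_ne_red (this.2.symm.trans cyu)
  · rintro y ⟨ayw, cyw, ayx, cyx⟩
    obtain ⟨-, auy, cuy⟩ :=
      opposite_edge G hG hvw hvwc hu huc ayw.symm (by rw [G.col_symm]; exact cyw)
    have := mono_trans G blue hG.1.1 auy.symm (by rw [G.col_symm]; exact cuy) aux cux ayx.ne
    exact blue_ne_red (this.2.symm.trans cyx)
end

section
/- Let G be a bicolored graph in the class 𝒯 and let Z be a connected component of G containing no red triangle. Then for any two disjoint red edges {u, v} and {x, y} of Z, the induced subgraph of G on {u, v, x, y} is a cycle on four vertices in which any two subsequent edges have different colors: its red edges are {u, v} and {x, y}, and the other two edges are blue. -/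
variable {V : Type}

/-- `a` and `b` are joined by an edge of color `i`. -/
def ColAdj (G : EColGraph V 2) (i : Fin 2) (a b : V) : Prop :=
  G.graph.Adj a b ∧ G.col a b = i

/-- Each vertex of `Z` lies on at most one red edge. -/
def RedMatching (G : EColGraph V 2) (Z : Set V) : Prop :=
  ∀ a b c : V, a ∈ Z → ColAdj G red a b → ColAdj G red a c → b = c

theorem ColAdj.symm {G : EColGraph V 2} {i : Fin 2} {a b : V} (h : ColAdj G i a b) :
    ColAdj G i b a :=
  ⟨h.1.symm, (G.col_symm b a).trans h.2⟩

theorem mono_adj_iff (G : EColGraph V 2) (i : Fin 2) (a b : V) :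
    (mono G i).Adj a b ↔ ColAdj G i a b := by
  rw [mono, SimpleGraph.fromRel_adj]
  constructor
  · rintro ⟨-, h | h⟩
    · exact h
    · exact ColAdj.symm h
  · intro h
    exact ⟨h.1.ne, Or.inl h⟩

theorem ColAdj.trans {G : EColGraph V 2} {i : Fin 2} (hC : IsClusterGraph (mono G i)) {a b c : V}
    (hab : ColAdj G i a b) (hbc : ColAdj G i b c) : a = c ∨ ColAdj G i a c := by
  rw [← mono_adj_iff] at hab hbc ⊢
  exact hC a c (hab.reachable.trans hbc.reachable)

theorem blue_or_red_s15 {G : EColGraph V 2} {a b : V} (h : G.graph.Adj a b) :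
    ColAdj G blue a b ∨ ColAdj G red a b := by
  have h2 : G.col a b = 0 ∨ G.col a b = 1 := by omega
  exact h2.imp (fun e => ⟨h, e⟩) (fun e => ⟨h, e⟩)

theorem not_blue_and_red {G : EColGraph V 2} {a b : V} (hb : ColAdj G blue a b)
    (hr : ColAdj G red a b) : False :=
  absurd (hb.2.symm.trans hr.2) (by decide)

/-- A blue edge `ux` followed by a red edge `xy` leaves no edge `uy`: a blue one would make `xy` blue,
a red one would put two red edges on `y`. -/
theorem not_adj_diagonal {G : EColGraph V 2} {Z : Set V} (hB : IsClusterGraph (mono G blue))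
    (hM : RedMatching G Z) {u x y : V} (hy : y ∈ Z)
    (hxy : ColAdj G red x y) (hux : ColAdj G blue u x) : ¬ G.graph.Adj u y := by
  intro h
  rcases blue_or_red_s15 h with h | h
  · rcases hux.symm.trans hB h with e | e
    · exact hxy.1.ne e
    · exact not_blue_and_red e hxy
  · exact hux.1.ne (hM y u x hy h.symm hxy.symm)

/-- A blue edge between two red edges of `Z` completes to an alternating four-cycle. -/
theorem alternating_cycle {G : EColGraph V 2} {Z : Set V} (hG : InT G) (hM : RedMatching G Z)
    {u v x y : V} (hv : v ∈ Z) (hy : y ∈ Z) (huv : ColAdj G red u v) (hxy : ColAdj G red x y)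
    (hux : ColAdj G blue u x) :
    ColAdj G blue v y ∧ ¬ G.graph.Adj u y ∧ ¬ G.graph.Adj v x := by
  obtain ⟨⟨hB, -⟩, hP⟩ := hG
  have huy : ¬ G.graph.Adj u y := not_adj_diagonal hB hM hy hxy hux
  have hvx : ¬ G.graph.Adj v x := fun h => not_adj_diagonal hB hM hv huv hux.symm h.symm
  have hne : v ≠ y := by
    rintro rfl
    exact huy huv.1
  have hadj : G.graph.Adj v y := by
    by_contra h
    refine hP ⟨v, u, x, y, huv.1.ne.symm, ?_, hne, hux.1.ne, ?_, hxy.1.ne,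
      huv.symm.1, huv.symm.2, hux.1, hux.2, hxy.1, hxy.2, hvx, h, huy⟩
    · rintro rfl
      exact not_blue_and_red hux huv
    · rintro rfl
      exact not_blue_and_red hux.symm hxy
  refine ⟨(blue_or_red_s15 hadj).resolve_right fun h => ?_, huy, hvx⟩
  have e : u = y := hM v u y hv huv.symm h
  subst e
  exact not_blue_and_red hux.symm hxy

/-- The end vertices of a red edge of `Z` and their blue neighbours fill the whole component. -/
theorem mem_or_blue_of_reachable {G : EColGraph V 2} {Z : Set V} (hG : InT G)
    (hM : RedMatching G Z) (hZ : ∀ a b : V, a ∈ Z → G.graph.Adj a b → b ∈ Z) {u v : V}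
    (hu : u ∈ Z) (huv : ColAdj G red u v) {w : V} (hw : G.graph.Reachable u w) :
    w = u ∨ w = v ∨ ColAdj G blue u w ∨ ColAdj G blue v w := by
  have hv : v ∈ Z := hZ u v hu huv.1
  rw [SimpleGraph.reachable_iff_reflTransGen] at hw
  suffices h : w ∈ Z ∧ (w = u ∨ w = v ∨ ColAdj G blue u w ∨ ColAdj G blue v w) from h.2
  induction hw with
  | refl => exact ⟨hu, Or.inl rfl⟩
  | @tail b c _ hbc ih =>
    obtain ⟨hbZ, ih⟩ := ih
    have hcZ : c ∈ Z := hZ b c hbZ hbc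
    refine ⟨hcZ, ?_⟩
    rcases blue_or_red_s15 hbc with h | h
    · rcases ih with rfl | rfl | ih | ih
      · exact Or.inr (Or.inr (Or.inl h))
      · exact Or.inr (Or.inr (Or.inr h))
      · rcases ih.trans hG.1.1 h with e | e
        · exact Or.inl e.symm
        · exact Or.inr (Or.inr (Or.inl e))
      · rcases ih.trans hG.1.1 h with e | e
        · exact Or.inr (Or.inl e.symm)
        · exact Or.inr (Or.inr (Or.inr e))
    · rcases ih with rfl | rfl | ih | ih
      · exact Or.inr (Or.inl (hM _ _ _ hbZ h huv))
      · exact Or.inl (hM _ _ _ hbZ h huv.symm)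
      · exact Or.inr (Or.inr (Or.inr (alternating_cycle hG hM hv hcZ huv h ih).1))
      · exact Or.inr (Or.inr (Or.inl (alternating_cycle hG hM hu hcZ huv.symm h ih).1))

theorem stmt15 (G : EColGraph V 2) (hG : InT G)
    (v0 : V) (Z : Set V) (hZ : Z = {w | G.graph.Reachable v0 w})
    -- `Z` contains no red triangle
    (hnotri : ¬ ∃ a b c : V, a ∈ Z ∧ b ∈ Z ∧ c ∈ Z ∧ a ≠ b ∧ b ≠ c ∧ a ≠ c ∧
      G.graph.Adj a b ∧ G.col a b = red ∧
      G.graph.Adj b c ∧ G.col b c = red ∧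
      G.graph.Adj a c ∧ G.col a c = red)
    (u v x y : V) (hu : u ∈ Z) (hv : v ∈ Z) (hx : x ∈ Z) (hy : y ∈ Z)
    -- `{u,v}` and `{x,y}` are disjoint red edges of `Z`
    (hux : u ≠ x) (huy : u ≠ y) (hvx : v ≠ x) (hvy : v ≠ y)
    (huv : G.graph.Adj u v) (huvc : G.col u v = red)
    (hxy : G.graph.Adj x y) (hxyc : G.col x y = red) :
    (G.graph.Adj u x ∧ G.col u x = blue ∧ G.graph.Adj v y ∧ G.col v y = blue ∧
      ¬ G.graph.Adj u y ∧ ¬ G.graph.Adj v x) ∨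
    (G.graph.Adj u y ∧ G.col u y = blue ∧ G.graph.Adj v x ∧ G.col v x = blue ∧
      ¬ G.graph.Adj u x ∧ ¬ G.graph.Adj v y) := by
  have hmem : ∀ w, w ∈ Z ↔ G.graph.Reachable v0 w := fun w => by rw [hZ]; rfl
  have hcl : ∀ a b : V, a ∈ Z → G.graph.Adj a b → b ∈ Z := fun a b ha hab =>
    (hmem b).2 (((hmem a).1 ha).trans hab.reachable)
  -- Two red edges at one vertex would close up to a red triangle.
  have hM : RedMatching G Z := by
    intro a b c ha hab hac
    by_contra hne
    have hbc : ColAdj G red b c := (hab.symm.trans hG.1.2 hac).resolve_left hne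
    exact hnotri ⟨a, b, c, ha, hcl a b ha hab.1, hcl a c ha hac.1, hab.1.ne, hne, hac.1.ne,
      hab.1, hab.2, hbc.1, hbc.2, hac.1, hac.2⟩
  have hUV : ColAdj G red u v := ⟨huv, huvc⟩
  have hXY : ColAdj G red x y := ⟨hxy, hxyc⟩
  have hreach : G.graph.Reachable u x := ((hmem u).1 hu).symm.trans ((hmem x).1 hx)
  rcases mem_or_blue_of_reachable hG hM hcl hu hUV hreach with e | e | h | h
  · exact absurd e.symm hux
  · exact absurd e.symm hvx
  · obtain ⟨h1, h2, h3⟩ := alternating_cycle hG hM hv hy hUV hXY h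
    exact Or.inl ⟨h.1, h.2, h1.1, h1.2, h2, h3⟩
  · obtain ⟨h1, h2, h3⟩ := alternating_cycle hG hM hu hy hUV.symm hXY h
    exact Or.inr ⟨h1.1, h1.2, h.1, h.2, h3, h2⟩
end
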